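/- arXiv:1203.6766 — 2 statements merged into one kernel-verified Lean document; each statement's English description precedes it below -/
import Mathlib

section
/- Let f : 𝒪_F → E be a function of class C^r. Then the family of bounded functions (D_i f)_{i ∈ I_{≤[r]}} appearing in the definition of class C^r is unique: if (F_i)_{i∈I_{≤[r]}} and (G_i)_{i∈I_{≤[r]}} are two families of bounded functions 𝒪_F → E both satisfying the defining condition of class C^r for f, then F_i = G_i for every i ∈ I_{≤[r]}. -/
/-!
Setting (cf. the paper's notations): `O` plays the role of the ring of integers `𝒪_F` of a
finite extension `F` of `ℚ_p`, `E` is the coefficient field (a finite extension of `ℚ_p`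
with its p-adic absolute value, normalized by `|x| = p^{-val_F(x)}`, `val_F(p) = [F:ℚ_p]`),
`S` is the (finite) set of `ℚ_p`-algebra embeddings `F ↪ E`, restricted here to `O`,
`ν : O → ℝ` is the absolute value on `O` (the common restriction of the norm of `E` along any
embedding), `ϖ` is a fixed uniformizer with `ν ϖ = q⁻¹` where `q = p^f` is the cardinality
of the residue field, and `u * ϖ ^ e = p` records the ramification index `e`.
-/

open scoped Classical

noncomputable section

namespace CrPaper

structure Setting (S O E : Type*) [Fintype S] [CommRing O] [NormedField E] where
  q : ℝ
  p : ℕ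
  fdeg : ℕ
  hp : p.Prime
  hfdeg : 0 < fdeg
  hq : q = (p : ℝ) ^ fdeg
  emb : S → O →+* E
  emb_inj : ∀ s, Function.Injective (emb s)
  emb_distinct : Function.Injective emb
  ν : O → ℝ
  norm_emb : ∀ (s) (z : O), ‖emb s z‖ = ν z
  norm_le_one : ∀ (s) (z : O), ‖emb s z‖ ≤ 1
  norm_add_max : ∀ x y : E, ‖x + y‖ ≤ max ‖x‖ ‖y‖
  ϖ : O
  ν_ϖ : ν ϖ = q⁻¹
  mem_ball_iff : ∀ (y : O) (n : ℕ), (∃ z, y = ϖ ^ n * z) ↔ ν y ≤ q⁻¹ ^ n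
  ram : ∃ (e : ℕ) (u : O), 0 < e ∧ IsUnit u ∧ u * ϖ ^ e = (p : O)

variable {S O E : Type*} [Fintype S] [DecidableEq S] [CommRing O] [IsDomain O]
  [NormedField E] [CompleteSpace E] [CharZero E]

/-- The total weight `|i| = ∑ i_σ` of a multi-index. -/
def wt (i : S → ℕ) : ℕ := ∑ s, i s

/-- `i! = ∏ i_σ!` for a multi-index. -/
def mfact (i : S → ℕ) : ℕ := ∏ s, (i s).factorial

/-- The (finite) set `I_{≤N}` of multi-indices of total weight `≤ N`. -/
def Idx (S : Type*) [Fintype S] [DecidableEq S] (N : ℕ) : Finset (S → ℕ) :=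
  (Fintype.piFinset fun _ : S => Finset.range (N + 1)).filter fun i => wt i ≤ N

/-- `z^i = ∏_σ σ(z)^{i_σ}`. -/
def mpow (St : Setting S O E) (z : O) (i : S → ℕ) : E := ∏ s, St.emb s z ^ i s

/-- The Taylor remainder `ε_{f,N}(x,y) = f(x+y) − ∑_{|i|≤N} D_i f(x) y^i / i!`. -/
def epsTay (St : Setting S O E) (N : ℕ) (f : O → E) (D : (S → ℕ) → O → E) (x y : O) : E :=
  f (x + y) - ∑ i ∈ Idx S N, D i x * mpow St y i / (mfact i : E)

/-- `f` is of class `C^r` with the family of bounded functions `D` witnessing the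
definition: all `D_i` (`|i| ≤ ⌊r⌋`) are bounded and
`C_{f,r}(h) = sup_{x ∈ O, y ∈ ϖ^h O} |ε_{f,⌊r⌋}(x,y)| q^{rh} → 0` as `h → ∞`. -/
def IsCrWith (St : Setting S O E) (r : ℝ) (f : O → E) (D : (S → ℕ) → O → E) : Prop :=
  (∀ i ∈ Idx S ⌊r⌋₊, ∃ C : ℝ, ∀ x : O, ‖D i x‖ ≤ C) ∧
  ∀ ε : ℝ, 0 < ε → ∃ M : ℕ, ∀ h : ℕ, M ≤ h → ∀ x z : O,
    ‖epsTay St ⌊r⌋₊ f D x (St.ϖ ^ h * z)‖ * St.q ^ (r * (h : ℝ)) ≤ ε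

/-- `f` is of class `C^r`. -/
def IsCr (St : Setting S O E) (r : ℝ) (f : O → E) : Prop :=
  ∃ D, IsCrWith St r f D

/-- The `C^r`-norm of `f` (relative to the — unique — family `D`):
`max( sup_{i,x} |D_i f(x)/i!| , sup_{x,y} |ε_{f,⌊r⌋}(x,y)|/|y|^r )`. -/
def CrNorm (St : Setting S O E) (r : ℝ) (f : O → E) (D : (S → ℕ) → O → E) : ℝ :=
  max (⨆ i : (Idx S ⌊r⌋₊), ⨆ x : O, ‖D i.1 x / (mfact i.1 : E)‖)
      (⨆ x : O, ⨆ y : O, ‖epsTay St ⌊r⌋₊ f D x y‖ / St.ν y ^ r)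

theorem exists_sep (St : Setting S O E) (s0 : S) (T : Finset S) (hT : s0 ∉ T) :
    ∃ a : O, ∀ s ∈ T, St.emb s a ≠ St.emb s0 a := by
  induction T using Finset.induction_on with
  | empty => exact ⟨0, by simp⟩
  | insert s1 T h1 ih =>
    simp only [Finset.mem_insert, not_or] at hT
    obtain ⟨a, ha⟩ := ih hT.2
    have hne : St.emb s1 ≠ St.emb s0 := fun h => hT.1 (St.emb_distinct h).symm
    obtain ⟨b, hb⟩ : ∃ b, St.emb s1 b ≠ St.emb s0 b := by
      by_contra! h
      exact hne (RingHom.ext h)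
    -- the bad parameters
    let bad : S → Set ℕ := fun s => {n : ℕ | St.emb s (b + n * a) = St.emb s0 (b + n * a)}
    have hfin : ∀ s ∈ insert s1 T, (bad s).Finite := by
      intro s hs
      apply Set.Subsingleton.finite
      intro m hm n hn
      simp only [bad, Set.mem_setOf_eq, map_add, map_mul, map_natCast] at hm hn
      by_contra hmn
      have hmn' : (m : E) - n ≠ 0 := sub_ne_zero.mpr (by exact_mod_cast hmn)
      have e1 : ((m : E) - n) * (St.emb s a - St.emb s0 a) = 0 := by
        linear_combination hm - hn
      have e2 : St.emb s a = St.emb s0 a := by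
        rcases mul_eq_zero.mp e1 with h | h
        · exact absurd h hmn'
        · exact sub_eq_zero.mp h
      rcases Finset.mem_insert.mp hs with rfl | hs
      · apply hb
        rw [e2] at hm
        exact add_right_cancel hm
      · exact ha s hs e2
    have hU : (⋃ s ∈ (insert s1 T : Finset S), bad s).Finite :=
      Set.Finite.biUnion (Finset.finite_toSet _) hfin
    obtain ⟨n, hn⟩ := hU.infinite_compl.nonempty
    refine ⟨b + n * a, fun s hs h => hn ?_⟩
    simp only [Set.mem_iUnion]
    exact ⟨s, hs, h⟩

/-- `z ↦ z^i` as a multiplicative character. -/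
def mpowHom (St : Setting S O E) (i : S → ℕ) : O →* E where
  toFun z := mpow St z i
  map_one' := by simp [mpow]
  map_mul' x y := by simp [mpow, mul_pow, Finset.prod_mul_distrib]

theorem mpowHom_inj (St : Setting S O E) : Function.Injective (mpowHom St) := by
  intro i j hij
  funext s0
  obtain ⟨a, ha⟩ := exists_sep St s0 (Finset.univ.erase s0) (by simp)
  have ha' : ∀ s, s ≠ s0 → St.emb s a ≠ St.emb s0 a := fun s hs => ha s (by simp [hs])
  let P : (S → ℕ) → Polynomial E := fun i =>
    ∏ s, (Polynomial.X - Polynomial.C (-St.emb s a)) ^ i s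
  have hP : P i = P j := by
    apply Polynomial.eq_of_infinite_eval_eq
    refine Set.Infinite.mono ?_ (Set.infinite_range_of_injective (Nat.cast_injective (R := E)))
    rintro _ ⟨n, rfl⟩
    have := DFunLike.congr_fun hij ((n : O) + a)
    simpa [mpowHom, mpow, P, Polynomial.eval_prod] using this
  have hc : ∀ i : S → ℕ, (P i).roots.count (-St.emb s0 a) = i s0 := by
    intro i
    have h0 : P i ≠ 0 := Finset.prod_ne_zero_iff.mpr
      (fun s _ => pow_ne_zero _ (Polynomial.X_sub_C_ne_zero _))
    rw [Polynomial.roots_prod _ _ h0, Multiset.count_bind]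
    simp only [Polynomial.roots_pow, Polynomial.roots_X_sub_C, Multiset.count_nsmul]
    change ∑ s, i s * Multiset.count (-St.emb s0 a) {-St.emb s a} = _
    rw [Finset.sum_eq_single s0]
    · simp
    · intro s _ hs
      rw [Multiset.count_singleton, if_neg, mul_zero]
      intro h
      exact ha' s hs (neg_injective h).symm
    · simp
  rw [← hc i, ← hc j, hP]

theorem exists_dual (St : Setting S O E) (I : Finset (S → ℕ)) (i0 : I) :
    ∃ c : O →₀ E, ∀ i : I, (c.sum fun z a => a * mpow St z i) = if i = i0 then 1 else 0 := by
  have hli : LinearIndependent E (fun i : I => (mpowHom St i : O → E)) :=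
    (linearIndependent_monoidHom O E).comp (fun i : I => mpowHom St i)
      ((mpowHom_inj St).comp Subtype.val_injective)
  let v : O → (I → E) := fun z i => mpow St z i
  have hspan : Submodule.span E (Set.range v) = ⊤ := by
    by_contra hne
    obtain ⟨φ, hφ, hle⟩ := Submodule.exists_le_ker_of_lt_top _ (lt_top_iff_ne_top.mpr hne)
    apply hφ
    have hrep : ∀ w : I → E, φ w = ∑ i, φ (Pi.single i 1) * w i := by
      intro w
      rw [LinearMap.pi_apply_eq_sum_univ φ w]
      refine Finset.sum_congr rfl fun i _ => ?_
      rw [smul_eq_mul, mul_comm]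
      congr 2
      funext k
      simp [Pi.single_apply, eq_comm]
    have hz := Fintype.linearIndependent_iff.mp hli (fun i => φ (Pi.single i 1)) (by
      funext z
      have h1 : φ (v z) = 0 := hle (Submodule.subset_span ⟨z, rfl⟩)
      rw [hrep] at h1
      rw [Finset.sum_apply]
      exact h1)
    apply LinearMap.ext
    intro w
    rw [hrep]
    exact Finset.sum_eq_zero fun i _ => by rw [hz i, zero_mul]
  have hm : (Pi.single i0 1 : I → E) ∈ Submodule.span E (Set.range v) := hspan ▸ trivial
  obtain ⟨c, hc⟩ := (Finsupp.mem_span_range_iff_exists_finsupp).mp hm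
  refine ⟨c, fun i => ?_⟩
  have := congrFun hc i
  simpa [Finsupp.sum, Finset.sum_apply, v, Pi.single_apply] using this

/-- uniqueness of the family `(D_i f)_{i ∈ I_{≤[r]}}` attached to a function of
class `C^r`. -/
theorem statement0 (St : Setting S O E) (r : ℝ) (hr : 0 ≤ r) (f : O → E)
    (F G : (S → ℕ) → O → E)
    (hF : IsCrWith St r f F) (hG : IsCrWith St r f G) :
    ∀ i ∈ Idx S ⌊r⌋₊, F i = G i := by
  intro i0 hi0
  funext x
  set N := ⌊r⌋₊ with hN
  have hp2 : (2 : ℝ) ≤ St.p := by exact_mod_cast St.hp.two_le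
  have hq1 : 1 ≤ St.q := by rw [St.hq]; exact one_le_pow₀ (by linarith)
  have hq0 : 0 < St.q := by linarith
  obtain ⟨c, hc⟩ := exists_dual St (Idx S N) ⟨i0, hi0⟩
  let A : (S → ℕ) → E := fun i => (F i x - G i x) / (mfact i : E)
  have hmf : (mfact i0 : E) ≠ 0 := by
    have : mfact i0 ≠ 0 := Finset.prod_ne_zero_iff.mpr fun s _ => Nat.factorial_ne_zero _
    exact_mod_cast this
  have hmul : ∀ (y z : O) i, mpow St (y * z) i = mpow St y i * mpow St z i :=
    fun y z i => (mpowHom St i).map_mul y z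
  have hnorm : ∀ h : ℕ, ‖mpow St (St.ϖ ^ h) i0‖ = (St.q⁻¹ ^ h) ^ wt i0 := by
    intro h
    simp only [mpow, wt, norm_prod, norm_pow, map_pow, St.norm_emb, St.ν_ϖ,
      Finset.prod_pow_eq_pow_sum]
  have hwt : (wt i0 : ℝ) ≤ r := by
    have h1 : wt i0 ≤ N := (Finset.mem_filter.mp hi0).2
    exact le_trans (by exact_mod_cast h1) (Nat.floor_le hr)
  let Q : O → E := fun y => ∑ i ∈ Idx S N, A i * mpow St y i
  have hQ : ∀ y, Q y = epsTay St N f G x y - epsTay St N f F x y := by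
    intro y
    simp only [Q, A, epsTay]
    rw [sub_sub_sub_cancel_left, ← Finset.sum_sub_distrib]
    exact Finset.sum_congr rfl fun i _ => by ring
  have hdual : ∀ h : ℕ, A i0 * mpow St (St.ϖ ^ h) i0 = c.sum fun z a => a * Q (St.ϖ ^ h * z) := by
    intro h
    simp only [Q, Finsupp.sum, Finset.mul_sum, hmul]
    rw [Finset.sum_comm]
    have h2 : ∀ i ∈ Idx S N, ∑ z ∈ c.support,
        c z * (A i * (mpow St (St.ϖ ^ h) i * mpow St z i)) =
        if i = i0 then A i * mpow St (St.ϖ ^ h) i else 0 := by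
      intro i hi
      have h3 := hc ⟨i, hi⟩
      simp only [Finsupp.sum, Subtype.mk.injEq] at h3
      calc _ = A i * mpow St (St.ϖ ^ h) i * ∑ z ∈ c.support, c z * mpow St z i := by
            rw [Finset.mul_sum]
            exact Finset.sum_congr rfl fun _ _ => by ring
        _ = _ := by rw [h3]; split_ifs <;> simp
    rw [Finset.sum_congr rfl h2, Finset.sum_ite_eq' (Idx S N) i0, if_pos hi0]
  let K : ℝ := ∑ z ∈ c.support, ‖c z‖
  have hK : 0 ≤ K := Finset.sum_nonneg fun _ _ => norm_nonneg _
  have hbound : ∀ ε : ℝ, 0 < ε → ‖A i0‖ ≤ K * (ε + ε) := by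
    intro ε hε
    obtain ⟨M1, h1⟩ := hF.2 ε hε
    obtain ⟨M2, h2⟩ := hG.2 ε hε
    set h := max M1 M2 with hh
    have hw : 0 < St.q ^ (r * (h : ℝ)) := Real.rpow_pos_of_pos hq0 _
    have hQb : ∀ z, ‖Q (St.ϖ ^ h * z)‖ * St.q ^ (r * (h : ℝ)) ≤ ε + ε := by
      intro z
      rw [hQ]
      have e1 := h1 h (le_max_left _ _) x z
      have e2 := h2 h (le_max_right _ _) x z
      have e3 := mul_le_mul_of_nonneg_right (norm_sub_le
        (epsTay St N f G x (St.ϖ ^ h * z)) (epsTay St N f F x (St.ϖ ^ h * z))) hw.le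
      rw [add_mul] at e3
      linarith
    have hone : 1 ≤ ‖mpow St (St.ϖ ^ h) i0‖ * St.q ^ (r * (h : ℝ)) := by
      rw [hnorm, inv_pow, inv_pow, ← pow_mul, inv_mul_eq_div, one_le_div (by positivity),
        ← Real.rpow_natCast]
      apply Real.rpow_le_rpow_of_exponent_le hq1
      push_cast
      nlinarith [Nat.cast_nonneg (α := ℝ) h]
    calc ‖A i0‖ ≤ ‖A i0‖ * (‖mpow St (St.ϖ ^ h) i0‖ * St.q ^ (r * (h : ℝ))) :=
          le_mul_of_one_le_right (norm_nonneg _) hone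
      _ = ‖c.sum fun z a => a * Q (St.ϖ ^ h * z)‖ * St.q ^ (r * (h : ℝ)) := by
          rw [← hdual, norm_mul, mul_assoc]
      _ ≤ (∑ z ∈ c.support, ‖c z‖ * ‖Q (St.ϖ ^ h * z)‖) * St.q ^ (r * (h : ℝ)) := by
          refine mul_le_mul_of_nonneg_right ?_ hw.le
          refine (norm_sum_le _ _).trans (le_of_eq ?_)
          exact Finset.sum_congr rfl fun _ _ => norm_mul _ _
      _ ≤ K * (ε + ε) := by
          simp only [K, Finset.sum_mul]
          refine Finset.sum_le_sum fun z _ => ?_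
          rw [mul_assoc]
          exact mul_le_mul_of_nonneg_left (hQb z) (norm_nonneg _)
  have hA : A i0 = 0 := by
    rw [← norm_le_zero_iff]
    refine le_of_forall_pos_le_add fun δ hδ => ?_
    have hK1 : 0 < 2 * (K + 1) := by linarith
    have h3 := hbound (δ / (2 * (K + 1))) (div_pos hδ hK1)
    have h4 : (K + 1) * (δ / (2 * (K + 1)) + δ / (2 * (K + 1))) = δ := by
      field_simp
      ring
    have h5 := div_pos hδ hK1
    nlinarith
  have h6 := (div_eq_zero_iff.mp hA).resolve_right hmf
  exact sub_eq_zero.mp h6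

end CrPaper
end
end

section
/- Let f : 𝒪_F → E be a function of class C^r. Then f is of class C^l for every real l with 0 ≤ l ≤ r. -/
/-!
Setting (cf. the paper's notations): `O` plays the role of the ring of integers `𝒪_F` of a
finite extension `F` of `ℚ_p`, `E` is the coefficient field (a finite extension of `ℚ_p`
with its p-adic absolute value, normalized by `|x| = p^{-val_F(x)}`, `val_F(p) = [F:ℚ_p]`),
`S` is the (finite) set of `ℚ_p`-algebra embeddings `F ↪ E`, restricted here to `O`,
`ν : O → ℝ` is the absolute value on `O` (the common restriction of the norm of `E` along any
embedding), `ϖ` is a fixed uniformizer with `ν ϖ = q⁻¹` where `q = p^f` is the cardinality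
of the residue field, and `u * ϖ ^ e = p` records the ramification index `e`.
-/

open scoped Classical

noncomputable section

namespace CrPaper

variable {S O E : Type*} [Fintype S] [DecidableEq S] [CommRing O] [IsDomain O]
  [NormedField E] [CompleteSpace E] [CharZero E]

theorem Idx_mono_aux {M N : ℕ} (h : M ≤ N) : Idx S M ⊆ Idx S N := by
  intro i hi
  simp only [Idx, Finset.mem_filter, Fintype.mem_piFinset, Finset.mem_range] at hi ⊢
  exact ⟨fun a => by have := hi.1 a; omega, hi.2.trans h⟩

theorem wt_of_notMem_aux {M : ℕ} {i : S → ℕ} (hi : i ∉ Idx S M) : M + 1 ≤ wt i := by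
  by_contra hc
  apply hi
  simp only [Idx, Finset.mem_filter, Fintype.mem_piFinset, Finset.mem_range]
  refine ⟨fun a => ?_, by omega⟩
  have : i a ≤ wt i := Finset.single_le_sum (f := i) (fun _ _ => Nat.zero_le _) (Finset.mem_univ a)
  omega

theorem one_lt_q_aux (St : Setting S O E) : 1 < St.q := by
  rw [St.hq]
  exact one_lt_pow₀ (by exact_mod_cast St.hp.one_lt) St.hfdeg.ne'

theorem norm_mpow_aux (St : Setting S O E) (h : ℕ) (z : O) (i : S → ℕ) :
    ‖mpow St (St.ϖ ^ h * z) i‖ ≤ (St.q⁻¹ ^ h) ^ wt i := by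
  have hq := one_lt_q_aux St
  rw [mpow, norm_prod, wt, ← Finset.prod_pow_eq_pow_sum]
  refine Finset.prod_le_prod (fun _ _ => norm_nonneg _) fun s _ => ?_
  rw [norm_pow]
  refine pow_le_pow_left₀ (norm_nonneg _) ?_ _
  rw [map_mul, map_pow, norm_mul, norm_pow, St.norm_emb s St.ϖ, St.ν_ϖ]
  exact mul_le_of_le_one_right (by positivity) (St.norm_le_one s z)

/-- a function of class `C^r` is of class `C^l` for every real `0 ≤ l ≤ r`. -/
theorem statement1 (St : Setting S O E) (r : ℝ) (hr : 0 ≤ r) (f : O → E)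
    (hf : IsCr St r f) :
    ∀ l : ℝ, 0 ≤ l → l ≤ r → IsCr St l f := by
  intro l hl hlr
  obtain ⟨D, hb, hD⟩ := hf
  have hq := one_lt_q_aux St
  have hq0 : 0 < St.q := by linarith
  have hsub : Idx S ⌊l⌋₊ ⊆ Idx S ⌊r⌋₊ := Idx_mono_aux (Nat.floor_le_floor hlr)
  refine ⟨D, fun i hi => hb i (hsub hi), ?_⟩
  choose! C hC using hb
  set T := Idx S ⌊r⌋₊ \ Idx S ⌊l⌋₊ with hT
  set K : ℝ := ∑ i ∈ T, C i / ‖(mfact i : E)‖ with hK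
  have hterm : ∀ (h : ℕ) (x z : O), ∀ i ∈ T,
      ‖D i x * mpow St (St.ϖ ^ h * z) i / (mfact i : E)‖
        ≤ C i / ‖(mfact i : E)‖ * (St.q⁻¹ ^ h) ^ (⌊l⌋₊ + 1) := by
    intro h x z i hi
    rw [hT, Finset.mem_sdiff] at hi
    have h1 := hC i hi.1 x
    have h2 : ‖mpow St (St.ϖ ^ h * z) i‖ ≤ (St.q⁻¹ ^ h) ^ (⌊l⌋₊ + 1) :=
      (norm_mpow_aux St h z i).trans
        (pow_le_pow_of_le_one (by positivity)
          (pow_le_one₀ (by positivity) (inv_le_one_of_one_le₀ hq.le)) (wt_of_notMem_aux hi.2))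
    rw [norm_div, norm_mul, div_mul_eq_mul_div]
    exact div_le_div_of_nonneg_right
      (mul_le_mul h1 h2 (norm_nonneg _) ((norm_nonneg _).trans h1)) (norm_nonneg _)
  have heps : ∀ x y : O, epsTay St ⌊l⌋₊ f D x y = epsTay St ⌊r⌋₊ f D x y
      + ∑ i ∈ T, D i x * mpow St y i / (mfact i : E) := by
    intro x y
    rw [epsTay, epsTay, ← Finset.sum_sdiff hsub]
    ring
  have hlim : Filter.Tendsto (fun h : ℕ => K * (St.q ^ (l - (⌊l⌋₊ + 1))) ^ h) Filter.atTop
      (nhds 0) := by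
    have h1 : St.q ^ (l - (⌊l⌋₊ + 1)) < 1 :=
      Real.rpow_lt_one_of_one_lt_of_neg hq (by linarith [Nat.lt_floor_add_one l])
    simpa using (tendsto_pow_atTop_nhds_zero_of_lt_one (by positivity) h1).const_mul K
  intro ε hε
  obtain ⟨M₁, hM₁⟩ := hD (ε / 2) (by positivity)
  obtain ⟨M₂, hM₂⟩ := Filter.eventually_atTop.1 (hlim.eventually_le_const (half_pos hε))
  refine ⟨max M₁ M₂, fun h hh x z => ?_⟩
  have a1 := hM₁ h ((le_max_left _ _).trans hh) x z
  have a2 := hM₂ h ((le_max_right _ _).trans hh)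
  have a3 : St.q ^ (l * (h : ℝ)) ≤ St.q ^ (r * (h : ℝ)) :=
    Real.rpow_le_rpow_of_exponent_le hq.le (by gcongr)
  have a4 : ‖∑ i ∈ T, D i x * mpow St (St.ϖ ^ h * z) i / (mfact i : E)‖
      ≤ K * (St.q⁻¹ ^ h) ^ (⌊l⌋₊ + 1) := by
    rw [hK, Finset.sum_mul]
    exact norm_sum_le_of_le _ (hterm h x z)
  have a5 : (St.q⁻¹ ^ h) ^ (⌊l⌋₊ + 1) * St.q ^ (l * (h : ℝ))
      = (St.q ^ (l - (⌊l⌋₊ + 1))) ^ h := by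
    rw [← Real.rpow_mul_natCast hq0.le, sub_mul, Real.rpow_sub hq0, ← pow_mul, inv_pow,
      div_eq_mul_inv, mul_comm]
    congr 2
    rw [← Real.rpow_natCast]
    push_cast
    rw [mul_comm]
  have hp : 0 < St.q ^ (l * (h : ℝ)) := Real.rpow_pos_of_pos hq0 _
  rw [heps]
  calc _ ≤ (‖epsTay St ⌊r⌋₊ f D x (St.ϖ ^ h * z)‖ + K * (St.q⁻¹ ^ h) ^ (⌊l⌋₊ + 1))
        * St.q ^ (l * (h : ℝ)) :=
        mul_le_mul_of_nonneg_right ((norm_add_le _ _).trans (by gcongr)) hp.le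
    _ = ‖epsTay St ⌊r⌋₊ f D x (St.ϖ ^ h * z)‖ * St.q ^ (l * (h : ℝ))
        + K * (St.q ^ (l - (⌊l⌋₊ + 1))) ^ h := by rw [add_mul, mul_assoc, a5]
    _ ≤ ε / 2 + ε / 2 :=
        add_le_add ((mul_le_mul_of_nonneg_left a3 (norm_nonneg _)).trans a1) a2
    _ = ε := by ring

end CrPaper
end
end
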